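/- arXiv:2108.13927 — 2 statements merged into one kernel-verified Lean document; each statement's English description precedes it below -/
import Mathlib

section
/- Consider C_n^c with state set Q = {1,…,n}. Let S ⊆ Q, let T be a proper subset of {1,…,n−c}, and let w ∈ {a,b}* with w ≠ ε be a word of minimum length such that S·w = T (meaning q·w is defined for all q ∈ S, the image of S under w equals T, and every word v with S·v = T satisfies |v| ≥ |w|). Then: (i) if S = Q, then w starts with b^{c+1}; (ii) if S ⊆ {1,…,n−c} and n−c ∈ S, then w starts with b^c a or with b^{c+1}; (iii) if S ⊆ {1,…,n−c} and n−c ∉ S, then w starts with a. -/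
/-- Partial transition function of the PFA `C_n^c`. `false` is letter `a`, `true` is letter `b`. -/
def cernyStep (c n q : ℕ) : Bool → Option ℕ
  | false =>
      if q ≤ n - c - 1 then some (q + 1)
      else if q = n then some 1 else none
  | true =>
      if q ≤ n - c - 1 then some q
      else if q = n then some 1 else some (q + 1)

/-- Action of a word on a state (`none` if undefined at some step). -/
def cernyRun (c n : ℕ) (q : ℕ) (w : List Bool) : Option ℕ :=
  List.foldlM (cernyStep c n) q w

/-- A word is synchronizing for `C_n^c`. -/
def IsSync (c n : ℕ) (w : List Bool) : Prop :=
  ∃ qs : ℕ, ∀ q ∈ Finset.Icc 1 n, cernyRun c n q w = some qs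

/-- `S·w = T` in `C_n^c`: the action of `w` is defined on every state of `S`, and the image of
`S` under `w` is exactly `T`. -/
def MapsOnto (c n : ℕ) (S T : Finset ℕ) (w : List Bool) : Prop :=
  (∀ q ∈ S, ∃ t ∈ T, cernyRun c n q w = some t) ∧
  (∀ t ∈ T, ∃ q ∈ S, cernyRun c n q w = some t)

/-!
On the tail `n-c, …, n-1` the letter `a` is undefined, so a nonempty word that brings `n-c` back
into `{1,…,n-c}` must start with `b^c` and continue. If `{1,…,n-c} ⊆ S`, then `S·b^c` is
`X = {1,…,n-c-1} ∪ {n}`, whatever else `S` contains, and `X·a = {1,…,n-c} ≠ T`. Hence a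
word starting with `b^c a` has to go on with `b^c`; but `S·b^c a b^c = X = S·b^c`, so it could be
shortened. Likewise a leading `b` can be dropped when all states of `S` lie below `n-c`, because `b`
fixes them.
-/

/-- `w` is a word of minimum length among those with `S·w = T` in `C_n^c`. -/
structure IsShortestWord (c n : ℕ) (S T : Finset ℕ) (w : List Bool) : Prop where
  mapsOnto : MapsOnto c n S T w
  length_le : ∀ v : List Bool, MapsOnto c n S T v → w.length ≤ v.length

section

variable {c n q k t : ℕ} {S T U : Finset ℕ} {v w x y : List Bool}

theorem cernyStep_false_of_lt (h : q < n - c) : cernyStep c n q false = some (q + 1) :=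
  if_pos (Nat.le_sub_one_of_lt h)

theorem cernyStep_true_of_lt (h : q < n - c) : cernyStep c n q true = some q :=
  if_pos (Nat.le_sub_one_of_lt h)

theorem cernyStep_false_eq_none (hc : c < n) (hq : n - c ≤ q) (hqn : q ≠ n) :
    cernyStep c n q false = none := by
  simp [cernyStep, show ¬q ≤ n - c - 1 by omega, hqn]

theorem cernyStep_true_eq_succ (hc : c < n) (hq : n - c ≤ q) (hqn : q ≠ n) :
    cernyStep c n q true = some (q + 1) := by
  simp [cernyStep, show ¬q ≤ n - c - 1 by omega, hqn]

theorem cernyStep_last (hc : c < n) (l : Bool) : cernyStep c n n l = some 1 := by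
  cases l <;> simp [cernyStep, show ¬n ≤ n - c - 1 by omega]

theorem cernyRun_nil (c n q : ℕ) : cernyRun c n q [] = some q := rfl

theorem cernyRun_cons (c n q : ℕ) (l : Bool) (w : List Bool) :
    cernyRun c n q (l :: w) = (cernyStep c n q l).bind (cernyRun c n · w) := rfl

theorem cernyRun_singleton (c n q : ℕ) (l : Bool) : cernyRun c n q [l] = cernyStep c n q l :=
  Option.bind_fun_some _

theorem cernyRun_append (c n q : ℕ) (v w : List Bool) :
    cernyRun c n q (v ++ w) = (cernyRun c n q v).bind (cernyRun c n · w) :=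
  List.foldlM_append

theorem cernyRun_replicate_true_of_lt (h : q < n - c) (k : ℕ) :
    cernyRun c n q (List.replicate k true) = some q := by
  induction k with
  | zero => rfl
  | succ k ih =>
    rw [List.replicate_succ, cernyRun_cons, cernyStep_true_of_lt h, Option.bind_some, ih]

theorem cernyRun_replicate_true_eq_add (hc : c < n) (hq : n - c ≤ q) (hk : q + k ≤ n) :
    cernyRun c n q (List.replicate k true) = some (q + k) := by
  induction k generalizing q with
  | zero => rfl
  | succ k ih =>
    rw [List.replicate_succ, cernyRun_cons, cernyStep_true_eq_succ hc hq (by omega),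
      Option.bind_some, ih (by omega) (by omega), Nat.succ_add_eq_add_succ]

theorem cernyRun_replicate_true_eq_one (hn : c + 2 ≤ n) (hq : n - c ≤ q) (hqn : q ≤ n)
    (hk : n < q + k) : cernyRun c n q (List.replicate k true) = some 1 := by
  induction k generalizing q with
  | zero => omega
  | succ k ih =>
    rw [List.replicate_succ, cernyRun_cons]
    obtain rfl | hlt := hqn.eq_or_lt
    · rw [cernyStep_last (by omega), Option.bind_some, cernyRun_replicate_true_of_lt (by omega)]
    · rw [cernyStep_true_eq_succ (by omega) hq hlt.ne, Option.bind_some,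
        ih (by omega) (by omega) (by omega)]

theorem exists_eq_replicate_true_append_cons_of_cernyRun (hc : c < n) (hq : n - c ≤ q)
    (hk : q + k ≤ n) (hrun : cernyRun c n q w = some t) (ht : t ≤ q) (hw : w ≠ []) :
    ∃ l v, w = List.replicate k true ++ l :: v := by
  induction k generalizing q w with
  | zero => exact List.exists_cons_of_ne_nil hw
  | succ k ih =>
    have hqn : q ≠ n := by omega
    obtain ⟨l, u, rfl⟩ := List.exists_cons_of_ne_nil hw
    rw [cernyRun_cons] at hrun
    cases l with
    | false => simp [cernyStep_false_eq_none hc hq hqn] at hrun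
    | true =>
      rw [cernyStep_true_eq_succ hc hq hqn, Option.bind_some] at hrun
      have hu : u ≠ [] := by
        rintro rfl
        rw [cernyRun_nil, Option.some_inj] at hrun
        omega
      obtain ⟨l, v, rfl⟩ := ih (by omega) (by omega) hrun (by omega) hu
      exact ⟨l, v, rfl⟩

theorem mapsOnto_iff_image_eq :
    MapsOnto c n S T w ↔ S.image (cernyRun c n · w) = T.image some := by
  simp only [MapsOnto, Finset.Subset.antisymm_iff, Finset.image_subset_iff, Finset.mem_image,
    and_comm, eq_comm]

theorem mapsOnto_nil_iff : MapsOnto c n S T [] ↔ S = T :=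
  mapsOnto_iff_image_eq.trans (Finset.image_injective (Option.some_injective ℕ)).eq_iff

theorem MapsOnto.append_iff (h : MapsOnto c n S U x) :
    MapsOnto c n S T (x ++ v) ↔ MapsOnto c n U T v := by
  have himage : S.image (cernyRun c n · (x ++ v)) = U.image (cernyRun c n · v) :=
    calc S.image (cernyRun c n · (x ++ v))
      _ = (S.image (cernyRun c n · x)).image (Option.bind · (cernyRun c n · v)) := by
        simp only [cernyRun_append, Finset.image_image, Function.comp_def]
      _ = (U.image some).image (Option.bind · (cernyRun c n · v)) := by
        rw [mapsOnto_iff_image_eq.1 h]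
      _ = U.image (cernyRun c n · v) := by
        simp only [Finset.image_image, Function.comp_def, Option.bind_some]
  rw [mapsOnto_iff_image_eq, mapsOnto_iff_image_eq, himage]

theorem mapsOnto_self_replicate_true (hS : ∀ q ∈ S, q < n - c) (k : ℕ) :
    MapsOnto c n S S (List.replicate k true) :=
  have hfix q (hq : q ∈ S) := cernyRun_replicate_true_of_lt (hS q hq) k
  ⟨fun q hq => ⟨q, hq, hfix q hq⟩, fun q hq => ⟨q, hq, hfix q hq⟩⟩

theorem mapsOnto_replicate_true (hn : c + 2 ≤ n) (hlow : Finset.Icc 1 (n - c) ⊆ S)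
    (hS : S ⊆ Finset.Icc 1 n) :
    MapsOnto c n S (insert n (Finset.Ico 1 (n - c))) (List.replicate c true) := by
  have hmid : cernyRun c n (n - c) (List.replicate c true) = some n := by
    rw [cernyRun_replicate_true_eq_add (by omega) le_rfl (by omega), Nat.sub_add_cancel (by omega)]
  constructor
  · intro q hq
    obtain ⟨hq1, hqn⟩ := Finset.mem_Icc.1 (hS hq)
    obtain hlt | rfl | hgt := lt_trichotomy q (n - c)
    · exact ⟨q, by simp [hq1, hlt], cernyRun_replicate_true_of_lt hlt c⟩
    · exact ⟨n, Finset.mem_insert_self .., hmid⟩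
    · exact ⟨1, by simp; omega, cernyRun_replicate_true_eq_one hn hgt.le hqn (by omega)⟩
  · intro t ht
    obtain rfl | ht := Finset.mem_insert.1 ht
    · exact ⟨t - c, hlow (by simp; omega), hmid⟩
    · obtain ⟨ht1, hlt⟩ := Finset.mem_Ico.1 ht
      exact ⟨t, hlow (Finset.mem_Icc.2 ⟨ht1, hlt.le⟩), cernyRun_replicate_true_of_lt hlt c⟩

theorem mapsOnto_singleton_false (hc : c < n) :
    MapsOnto c n (insert n (Finset.Ico 1 (n - c))) (Finset.Icc 1 (n - c)) [false] := by
  simp only [MapsOnto, cernyRun_singleton, Finset.mem_insert, Finset.mem_Ico, Finset.mem_Icc]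
  constructor
  · rintro q (rfl | ⟨-, hlt⟩)
    · exact ⟨1, by omega, cernyStep_last hc false⟩
    · exact ⟨q + 1, by omega, cernyStep_false_of_lt hlt⟩
  · rintro (_ | _ | t) ⟨ht1, ht⟩
    · omega
    · exact ⟨n, .inl rfl, cernyStep_last hc false⟩
    · exact ⟨t + 1, by omega, cernyStep_false_of_lt ht⟩

theorem MapsOnto.exists_eq_replicate_true_append_cons (hc : c < n) (hT : T ⊆ Finset.Icc 1 (n - c))
    (hmem : n - c ∈ S) (hw : w ≠ []) (h : MapsOnto c n S T w) :
    ∃ l v, w = List.replicate c true ++ l :: v := by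
  obtain ⟨t, ht, hrun⟩ := h.1 _ hmem
  exact exists_eq_replicate_true_append_cons_of_cernyRun hc le_rfl (by omega) hrun
    (Finset.mem_Icc.1 (hT ht)).2 hw

theorem replicate_succ_prefix_append_cons {α : Type*} (k : ℕ) (l : α) (v : List α) :
    List.replicate (k + 1) l <+: List.replicate k l ++ l :: v :=
  ⟨v, by simp [List.replicate_succ']⟩

theorem IsShortestWord.length_le_of_mapsOnto_prefix (h : IsShortestWord c n S T (x ++ v))
    (hx : MapsOnto c n S U x) (hy : MapsOnto c n S U y) : x.length ≤ y.length := by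
  have hlen := h.length_le (y ++ v) (hy.append_iff.2 (hx.append_iff.1 h.mapsOnto))
  simpa using hlen

theorem IsShortestWord.replicate_succ_prefix (hn : c + 2 ≤ n) (hlow : Finset.Icc 1 (n - c) ⊆ S)
    (hS : S ⊆ Finset.Icc 1 n) (hT : T ⊂ Finset.Icc 1 (n - c)) (hw : w ≠ [])
    (h : IsShortestWord c n S T w) : List.replicate (c + 1) true <+: w := by
  have hc : c < n := by omega
  have hmem : n - c ∈ Finset.Icc 1 (n - c) := Finset.right_mem_Icc.2 (by omega)
  obtain ⟨l, v, rfl⟩ := h.mapsOnto.exists_eq_replicate_true_append_cons hc hT.1 (hlow hmem) hw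
  cases l with
  | true => exact replicate_succ_prefix_append_cons c true v
  | false =>
    have hb := mapsOnto_replicate_true hn hlow hS
    have hba : MapsOnto c n S (Finset.Icc 1 (n - c)) (List.replicate c true ++ [false]) :=
      hb.append_iff.2 (mapsOnto_singleton_false hc)
    rw [List.append_cons] at h
    have hv_maps := hba.append_iff.1 h.mapsOnto
    have hv : v ≠ [] := by
      rintro rfl
      exact hT.ne (mapsOnto_nil_iff.1 hv_maps).symm
    obtain ⟨l, u, rfl⟩ := hv_maps.exists_eq_replicate_true_append_cons hc hT.1 hmem hv
    have hbab : MapsOnto c n S (insert n (Finset.Ico 1 (n - c)))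
        (List.replicate c true ++ [false] ++ List.replicate c true) :=
      hba.append_iff.2 (mapsOnto_replicate_true hn subset_rfl
        (Finset.Icc_subset_Icc_right (Nat.sub_le n c)))
    rw [← List.append_assoc] at h
    have hlen := h.length_le_of_mapsOnto_prefix hbab hb
    simp at hlen

theorem MapsOnto.replicate_append_prefix_or_replicate_succ_prefix (hc : c < n)
    (hT : T ⊆ Finset.Icc 1 (n - c)) (hmem : n - c ∈ S) (hw : w ≠ []) (h : MapsOnto c n S T w) :
    (List.replicate c true ++ [false]) <+: w ∨ List.replicate (c + 1) true <+: w := by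
  obtain ⟨l, v, rfl⟩ := h.exists_eq_replicate_true_append_cons hc hT hmem hw
  cases l with
  | false => exact .inl ⟨v, List.append_assoc ..⟩
  | true => exact .inr (replicate_succ_prefix_append_cons c true v)

theorem IsShortestWord.singleton_false_prefix (hS : ∀ q ∈ S, q < n - c) (hw : w ≠ [])
    (h : IsShortestWord c n S T w) : [false] <+: w := by
  obtain ⟨l, v, rfl⟩ := List.exists_cons_of_ne_nil hw
  cases l with
  | false => exact ⟨v, rfl⟩
  | true =>
    have hlen := h.length_le_of_mapsOnto_prefix (x := [true])
      (mapsOnto_self_replicate_true hS 1) (mapsOnto_nil_iff.2 rfl)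
    simp at hlen

end

theorem minimal_word_prefix_general (c n : ℕ) (hn : c + 2 ≤ n)
    (S T : Finset ℕ) (hS : S ⊆ Finset.Icc 1 n) (hT : T ⊂ Finset.Icc 1 (n - c))
    (w : List Bool) (hw : w ≠ []) (h : IsShortestWord c n S T w) :
    (Finset.Icc 1 (n - c) ⊆ S → List.replicate (c + 1) true <+: w) ∧
    (n - c ∈ S →
      (List.replicate c true ++ [false]) <+: w ∨ List.replicate (c + 1) true <+: w) ∧
    ((∀ q ∈ S, q < n - c) → [false] <+: w) :=
  ⟨fun hlow => h.replicate_succ_prefix hn hlow hS hT hw,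
    fun hmem => h.mapsOnto.replicate_append_prefix_or_replicate_succ_prefix (by omega) hT.1 hmem hw,
    fun hlt => h.singleton_false_prefix hlt hw⟩

/-- **Lemma.** Let `S ⊆ Q = {1,…,n}`, let `T` be a proper subset of `{1,…,n-c}`, and let
`w ≠ ε` be a word of minimum length with `S·w = T`. Then:
(i) if `S = Q` then `w` starts with `b^{c+1}`;
(ii) if `S ⊆ {1,…,n-c}` and `n-c ∈ S` then `w` starts with `b^c a` or with `b^{c+1}`;
(iii) if `S ⊆ {1,…,n-c}` and `n-c ∉ S` then `w` starts with `a`. -/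
theorem minimal_word_prefix (c n : ℕ) (hn : c + 2 ≤ n)
    (S T : Finset ℕ) (hS : S ⊆ Finset.Icc 1 n) (hT : T ⊂ Finset.Icc 1 (n - c))
    (w : List Bool) (hw : w ≠ [])
    (hmap : MapsOnto c n S T w)
    (hmin : ∀ v : List Bool, MapsOnto c n S T v → w.length ≤ v.length) :
    (S = Finset.Icc 1 n → List.replicate (c + 1) true <+: w) ∧
    (S ⊆ Finset.Icc 1 (n - c) → (n - c) ∈ S →
      (List.replicate c true ++ [false]) <+: w ∨ List.replicate (c + 1) true <+: w) ∧
    (S ⊆ Finset.Icc 1 (n - c) → (n - c) ∉ S → [false] <+: w) := by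
  obtain ⟨hfull, hmem, hlt⟩ := minimal_word_prefix_general c n hn S T hS hT w hw ⟨hmap, hmin⟩
  exact ⟨fun hSQ => hfull (hSQ ▸ Finset.Icc_subset_Icc_right (Nat.sub_le n c)), fun _ => hmem,
    fun hSlow hnot => hlt fun q hq =>
      (Finset.mem_Icc.1 (hSlow hq)).2.lt_of_ne (ne_of_mem_of_not_mem hq hnot)⟩
end

section
/- For all integers c ≥ 1 and n' ≥ 1 with n' < c, we have f_{c−1}(n'+1) > f_c(n'). -/
/-- The solution `f_c` of the pawn race problem:
`f_c(1) = 0` and `f_c(n) = min { f_c(i) + f_c(n-i) + (c+1)·n - i | 1 ≤ i ≤ n-1 }` for `n ≥ 2`. -/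
def fc (c : ℕ) : ℕ → ℕ
  | 0 => 0
  | 1 => 0
  | n + 2 =>
      (Finset.Icc 1 (n + 1)).attach.inf'
        (Finset.attach_nonempty_iff.mpr ⟨1, by simp⟩)
        (fun i => fc c i.1 + fc c (n + 2 - i.1) + (c + 1) * (n + 2) - i.1)
termination_by n => n
decreasing_by
  all_goals
    have h := i.2
    simp only [Finset.mem_Icc] at h
    omega

/-!
Unfolding its recurrence, `f_c(n)` is the least cost of a binary tree with `n` leaves, where an
internal node with `m` leaves, `r` of them on its right, pays `c * m + r`. Take an optimal tree for
`f_{c-1}(n+1)`, of height `h`, and erase a deepest leaf. Each of its `h` ancestors loses a leaf, and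
its parent, which had two leaves, disappears: this saves at least `(c - 1) * (h + 1) + 1`. Raising
`c - 1` to `c` charges the remaining tree its external path length, which is at most
`(n - 1) * (h + 1)`, and hence less than what was saved when `n ≤ c`.
-/

open BinaryTree

variable {α : Type*}

theorem fc_one (c : ℕ) : fc c 1 = 0 := by
  rw [fc]

theorem fc_add_le (c : ℕ) {l r : ℕ} (hl : 1 ≤ l) (hr : 1 ≤ r) :
    fc c (l + r) ≤ fc c l + fc c r + c * (l + r) + r := by
  obtain ⟨n, hn⟩ : ∃ n, l + r = n + 2 := ⟨l + r - 2, by omega⟩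
  have hl_mem : l ∈ Finset.Icc 1 (n + 1) := Finset.mem_Icc.2 (by omega)
  have hr_eq : n + 2 - l = r := by omega
  rw [hn, fc]
  calc _ ≤ fc c l + fc c (n + 2 - l) + (c + 1) * (n + 2) - l :=
        Finset.inf'_le _ (Finset.mem_attach _ ⟨l, hl_mem⟩)
    _ ≤ fc c l + fc c r + c * (n + 2) + r := by
        rw [hr_eq, add_one_mul]
        omega

theorem exists_fc_eq_add (c : ℕ) {n : ℕ} (hn : 2 ≤ n) :
    ∃ l r, 1 ≤ l ∧ 1 ≤ r ∧ l + r = n ∧ fc c n = fc c l + fc c r + c * n + r := by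
  obtain ⟨m, rfl⟩ := Nat.exists_eq_add_of_le' hn
  rw [fc]
  obtain ⟨⟨l, hl_mem⟩, -, hmin⟩ := Finset.exists_mem_eq_inf'
    (Finset.attach_nonempty_iff.2 (Finset.nonempty_Icc.2 (Nat.le_add_left 1 m)))
    fun i ↦ fc c i.1 + fc c (m + 2 - i.1) + (c + 1) * (m + 2) - i.1
  obtain ⟨hl, hlm⟩ := Finset.mem_Icc.1 hl_mem
  refine ⟨l, m + 2 - l, hl, by omega, by omega, hmin.trans ?_⟩
  simp only [add_one_mul]
  omega

/-- The cost of the splitting strategy encoded by a binary tree: an internal node with `l` leaves on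
its left and `r` leaves on its right pays `c * (l + r) + r`. This is the charge `(c + 1) * n - i` of
the recurrence for `n = l + r` and `i = l`, written without truncated subtraction. -/
def splitCost (c : ℕ) : BinaryTree α → ℕ
  | nil => 0
  | node _ l r =>
      splitCost c l + splitCost c r + c * (l.numLeaves + r.numLeaves) + r.numLeaves

theorem fc_numLeaves_le_splitCost (c : ℕ) (t : BinaryTree α) :
    fc c t.numLeaves ≤ splitCost c t := by
  induction t with
  | nil => exact (fc_one c).le
  | node _ l r ihl ihr =>
    calc fc c (l.numLeaves + r.numLeaves)
        ≤ fc c l.numLeaves + fc c r.numLeaves + c * (l.numLeaves + r.numLeaves) + r.numLeaves :=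
          fc_add_le c l.numLeaves_pos r.numLeaves_pos
      _ ≤ splitCost c l + splitCost c r + c * (l.numLeaves + r.numLeaves) + r.numLeaves := by
          gcongr

theorem exists_splitCost_eq_fc (c : ℕ) {n : ℕ} (hn : 1 ≤ n) :
    ∃ t : BinaryTree Unit, t.numLeaves = n ∧ splitCost c t = fc c n := by
  induction n using Nat.strong_induction_on with
  | _ n ih =>
    obtain rfl | hn₂ := hn.eq_or_lt
    · exact ⟨nil, rfl, (fc_one c).symm⟩
    · obtain ⟨l, r, hl, hr, rfl, hfc⟩ := exists_fc_eq_add c hn₂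
      obtain ⟨s, rfl, hs⟩ := ih l (by omega) hl
      obtain ⟨t, rfl, ht⟩ := ih r (by omega) hr
      exact ⟨s △ t, rfl, by rw [splitCost, hs, ht, hfc]⟩

/-- The sum of the depths of the leaves, computed by letting each internal node count the leaves
below it. -/
def externalPathLength : BinaryTree α → ℕ
  | nil => 0
  | node _ l r =>
      externalPathLength l + externalPathLength r + (l.numLeaves + r.numLeaves)

theorem splitCost_succ (c : ℕ) (t : BinaryTree α) :
    splitCost (c + 1) t = splitCost c t + externalPathLength t := by
  induction t with
  | nil => rfl
  | node _ l r ihl ihr =>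
    simp only [splitCost, externalPathLength, ihl, ihr]
    ring

theorem externalPathLength_le_numLeaves_mul_height (t : BinaryTree α) :
    externalPathLength t ≤ t.numLeaves * t.height := by
  induction t with
  | nil => exact Nat.zero_le _
  | node _ l r ihl ihr =>
    calc externalPathLength l + externalPathLength r + (l.numLeaves + r.numLeaves)
        ≤ l.numLeaves * l.height + r.numLeaves * r.height + (l.numLeaves + r.numLeaves) := by
          gcongr
      _ ≤ l.numLeaves * max l.height r.height + r.numLeaves * max l.height r.height
            + (l.numLeaves + r.numLeaves) := by
          gcongr
          exacts [le_max_left _ _, le_max_right _ _]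
      _ = (l.numLeaves + r.numLeaves) * (max l.height r.height + 1) := by ring

theorem externalPathLength_le_numNodes_mul_succ_height (t : BinaryTree α) :
    externalPathLength t ≤ t.numNodes * (t.height + 1) :=
  calc externalPathLength t
      ≤ t.numLeaves * t.height := externalPathLength_le_numLeaves_mul_height t
    _ = t.numNodes * t.height + t.height := by rw [numLeaves_eq_numNodes_succ, add_one_mul]
    _ ≤ t.numNodes * t.height + t.numNodes := by gcongr; exact t.height_le_numNodes
    _ = t.numNodes * (t.height + 1) := (mul_add_one _ _).symm

theorem eq_nil_of_height_eq_zero {t : BinaryTree α} (ht : t.height = 0) : t = nil := by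
  cases t with
  | nil => rfl
  | node _ l r => exact absurd ht (Nat.succ_ne_zero _)

theorem exists_erase_deepest_leaf (c : ℕ) {t : BinaryTree α} (ht : t ≠ nil) :
    ∃ s : BinaryTree α, s.numLeaves + 1 = t.numLeaves ∧ s.height ≤ t.height ∧
      splitCost c s + c * (t.height + 1) + 1 ≤ splitCost c t := by
  -- Descend into the higher subtree until the node has two leaves as children, and collapse it.
  induction t with
  | nil => exact absurd rfl ht
  | node x l r ihl ihr =>
    rcases le_or_gt r.height l.height with hrl | hlr
    · by_cases hl : l = nil
      · subst hl
        obtain rfl : r = nil := eq_nil_of_height_eq_zero (Nat.le_zero.1 hrl)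
        exact ⟨nil, rfl, Nat.zero_le _, by simp [splitCost]⟩
      obtain ⟨s, hleaves, hheight, hcost⟩ := ihl hl
      refine ⟨node x s r, by simp only [numLeaves]; omega, by simp only [height]; omega, ?_⟩
      simp only [height, max_eq_left hrl, splitCost, ← hleaves]
      calc _ = splitCost c s + c * (l.height + 1) + 1 + splitCost c r
            + c * (s.numLeaves + 1 + r.numLeaves) + r.numLeaves := by ring
        _ ≤ splitCost c l + splitCost c r
            + c * (s.numLeaves + 1 + r.numLeaves) + r.numLeaves := by gcongr
    · have hr : r ≠ nil := by
        rintro rfl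
        exact Nat.not_lt_zero _ hlr
      obtain ⟨s, hleaves, hheight, hcost⟩ := ihr hr
      refine ⟨node x l s, by simp only [numLeaves]; omega, by simp only [height]; omega, ?_⟩
      simp only [height, max_eq_right hlr.le, splitCost, ← hleaves]
      calc _ = splitCost c l + (splitCost c s + c * (r.height + 1) + 1)
            + c * (l.numLeaves + (s.numLeaves + 1)) + s.numLeaves := by ring
        _ ≤ splitCost c l + splitCost c r
            + c * (l.numLeaves + (s.numLeaves + 1)) + (s.numLeaves + 1) := by
          gcongr
          exact Nat.le_succ _

theorem fc_compare_general {c n : ℕ} (hn : 1 ≤ n) (hnc : n ≤ c + 1) :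
    fc (c + 1) n < fc c (n + 1) := by
  obtain ⟨t, ht, ht_opt⟩ := exists_splitCost_eq_fc c (Nat.le_add_left 1 n)
  have ht_ne : t ≠ nil := by
    rintro rfl
    exact absurd ht (by simp only [numLeaves]; omega)
  obtain ⟨s, hleaves, hheight, hcost⟩ := exists_erase_deepest_leaf c ht_ne
  obtain rfl : s.numLeaves = n := by omega
  have hnodes : s.numNodes ≤ c := by rwa [numLeaves_eq_numNodes_succ, add_le_add_iff_right] at hnc
  calc fc (c + 1) s.numLeaves
      ≤ splitCost (c + 1) s := fc_numLeaves_le_splitCost (c + 1) s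
    _ = splitCost c s + externalPathLength s := splitCost_succ c s
    _ ≤ splitCost c s + s.numNodes * (s.height + 1) := by
        gcongr
        exact externalPathLength_le_numNodes_mul_succ_height s
    _ ≤ splitCost c s + c * (t.height + 1) := by gcongr
    _ < splitCost c t := hcost
    _ = fc c (s.numLeaves + 1) := ht_opt

/-- **Lemma.** For all `c ≥ 1` and `n' ≥ 1` with `n' < c`, we have `f_{c-1}(n'+1) > f_c(n')`. -/
theorem fc_compare (c n' : ℕ) (hc : 1 ≤ c) (hn' : 1 ≤ n') (h : n' < c) :
    fc (c - 1) (n' + 1) > fc c n' := by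
  obtain ⟨c, rfl⟩ := Nat.exists_eq_add_of_le' hc
  exact fc_compare_general hn' h.le
end
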